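/- arXiv:2101.04398 — 2 statements merged into one kernel-verified Lean document; each statement's English description precedes it below -/
import Mathlib

section
/- Let D be a Krull domain with quotient field K ≠ D that is not semi-local (i.e., D has infinitely many height-one prime ideals), and let I be a nonzero divisorial (fractional) ideal of D. Then there exist infinitely many height-one prime ideals P of D such that there exist a, b ∈ K with I^{-1} = (aD + bD)_v and v_P(a/b) = 1. -/
open scoped nonZeroDivisors

noncomputable section

/-- A height-one prime ideal (prime divisor) of a commutative ring:
a nonzero prime ideal that is minimal among nonzero prime ideals. -/
def IsHeightOnePrime {R : Type*} [CommRing R] (P : Ideal R) : Prop :=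
  P.IsPrime ∧ P ≠ ⊥ ∧ ∀ Q : Ideal R, Q.IsPrime → Q ≠ ⊥ → Q ≤ P → Q = P

/-- The divisorial (v-)closure `I_v = (R : (R : I))` of a fractional ideal. -/
def divClosure {R : Type*} [CommRing R] [IsDomain R] {K : Type*} [Field K] [Algebra R K]
    [IsFractionRing R K] (I : FractionalIdeal R⁰ K) : FractionalIdeal R⁰ K :=
  1 / (1 / I)

/-- A Krull domain: a domain that is completely integrally closed and satisfies the
ascending chain condition on (integral) divisorial ideals. -/
def IsKrullDomain (R : Type*) [CommRing R] [IsDomain R] : Prop :=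
  (∀ x : FractionRing R,
      (∃ c : R, c ≠ 0 ∧ ∀ n : ℕ,
          IsLocalization.IsInteger R (algebraMap R (FractionRing R) c * x ^ n)) →
      IsLocalization.IsInteger R x) ∧
  (∀ f : ℕ → Ideal R,
      (∀ n, divClosure (f n : FractionalIdeal R⁰ (FractionRing R)) =
        (f n : FractionalIdeal R⁰ (FractionRing R))) →
      (∀ n, f n ≤ f (n + 1)) → ∃ n, ∀ m, n ≤ m → f m = f n)

/-- Every divisor class of the Krull domain `R` (i.e. every class of v-invertible divisorial
fractional ideals modulo principal ones) contains infinitely many height-one prime ideals. -/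
def HasInfinitelyManyPrimeDivisorsInEachClass (R : Type*) [CommRing R] [IsDomain R] : Prop :=
  ∀ I : FractionalIdeal R⁰ (FractionRing R), I ≠ 0 → divClosure I = I →
    divClosure (I * (1 / I)) = 1 →
    {P : Ideal R | IsHeightOnePrime P ∧ ∃ c : FractionRing R, c ≠ 0 ∧
      (P : FractionalIdeal R⁰ (FractionRing R)) =
        divClosure (FractionalIdeal.spanSingleton R⁰ c * I)}.Infinite

/-- The subset `P·D_P` of `K`: elements of the form `a / b` with `a ∈ P`, `b ∉ P`. -/
def primeLocSet (D K : Type*) [CommRing D] [Field K] [Algebra D K] (P : Ideal D) : Set K :=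
  {x : K | ∃ a ∈ P, ∃ b : D, b ∉ P ∧ algebraMap D K b * x = algebraMap D K a}

/-- `v_P(x) = 1` for the normalized `P`-adic valuation at a height-one prime `P` of a Krull
domain: `x ∈ P·D_P` but `x` is not a product of two elements of `P·D_P`. -/
def valOneAt (D : Type*) {K : Type*} [CommRing D] [Field K] [Algebra D K] (P : Ideal D)
    (x : K) : Prop :=
  x ∈ primeLocSet D K P ∧ ¬ ∃ y ∈ primeLocSet D K P, ∃ z ∈ primeLocSet D K P, x = y * z

/-!
In a completely integrally closed domain `A A⁻¹` has divisorial closure `D` for every nonzero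
fractional ideal `A`, so no maximal divisorial ideal `Q` contains `A A⁻¹`; in other words
`A⁻¹ ⊄ (Q : A)`. With the ascending chain condition, every nonzero ideal lies in only finitely
many maximal divisorial ideals, and every height-one prime is maximal divisorial.

Given a height-one prime `P`, apply this to `I P⁻¹` to find `a ∈ (I P⁻¹)⁻¹` outside
`(P : I P⁻¹)`, so that `v_P(aI) = 1`. Then pick `b ∈ I⁻¹` with `bI ⊄ Q` for each of the finitely
many maximal divisorial `Q ⊇ aI`. The integral ideal `aI + bI` lies in no maximal divisorial ideal,
hence `(aD + bD)_v = I⁻¹`, and `v_P(bI) = 0` gives `v_P(a/b) = 1`.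
-/

section

open FractionalIdeal

variable {D K : Type*} [CommRing D] [IsDomain D] [Field K] [Algebra D K] [IsFractionRing D K]

instance : NoZeroDivisors (FractionalIdeal D⁰ K) where
  eq_zero_or_eq_zero_of_mul_eq_zero {A B} h := by
    by_contra! hAB
    obtain ⟨x, hx0, hx⟩ := exists_ne_zero_mem_isInteger hAB.1
    obtain ⟨y, hy0, hy⟩ := exists_ne_zero_mem_isInteger hAB.2
    have hxy := eq_zero_iff.1 h _ (mul_mem_mul hx hy)
    rw [← map_mul, IsFractionRing.to_map_eq_zero_iff] at hxy
    exact mul_ne_zero hx0 hy0 hxy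

lemma one_div_fractionalIdeal_ne_zero {A : FractionalIdeal D⁰ K} (hA : A ≠ 0) : 1 / A ≠ 0 :=
  right_ne_zero_of_mul (bot_lt_mul_inv hA).ne'

lemma algebraMap_mem_coeIdeal {Q : Ideal D} {d : D} :
    algebraMap D K d ∈ (Q : FractionalIdeal D⁰ K) ↔ d ∈ Q := by
  simp [mem_coeIdeal]

section DivisorialClosure

variable {A B : FractionalIdeal D⁰ K}

lemma le_divClosure (A : FractionalIdeal D⁰ K) : A ≤ divClosure A := by
  rcases eq_or_ne A 0 with rfl | hA
  · exact zero_le _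
  · exact (le_div_iff_mul_le (one_div_fractionalIdeal_ne_zero hA)).2 mul_one_div_le_one

lemma divClosure_ne_zero (hA : A ≠ 0) : divClosure A ≠ 0 :=
  one_div_fractionalIdeal_ne_zero (one_div_fractionalIdeal_ne_zero hA)

lemma divClosure_zero : divClosure (0 : FractionalIdeal D⁰ K) = 0 := by
  simp only [divClosure, FractionalIdeal.div_zero]

lemma divClosure_mono (h : A ≤ B) : divClosure A ≤ divClosure B := by
  rcases eq_or_ne A 0 with rfl | hA
  · exact divClosure_zero.trans_le (zero_le _)
  · have hB : B ≠ 0 := ne_bot_of_le_ne_bot hA h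
    exact inv_anti_mono (one_div_fractionalIdeal_ne_zero hB)
      (one_div_fractionalIdeal_ne_zero hA) (inv_anti_mono hA hB h)

/-- A fractional ideal is divisorial if it equals its divisorial closure. The zero ideal is
divisorial, because `1 / 0 = 0` for fractional ideals. -/
def IsDivisorial (A : FractionalIdeal D⁰ K) : Prop :=
  divClosure A = A

lemma isDivisorial_one_div (A : FractionalIdeal D⁰ K) : IsDivisorial (1 / A) := by
  rcases eq_or_ne A 0 with rfl | hA
  · simp only [IsDivisorial, FractionalIdeal.div_zero, divClosure_zero]
  · exact le_antisymm (inv_anti_mono hA (divClosure_ne_zero hA) (le_divClosure A))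
      (le_divClosure _)

lemma isDivisorial_divClosure (A : FractionalIdeal D⁰ K) : IsDivisorial (divClosure A) :=
  isDivisorial_one_div _

lemma isDivisorial_one : IsDivisorial (1 : FractionalIdeal D⁰ K) := by
  simpa only [FractionalIdeal.div_one] using isDivisorial_one_div (1 : FractionalIdeal D⁰ K)

lemma isDivisorial_spanSingleton (x : K) : IsDivisorial (spanSingleton D⁰ x) := by
  simp only [IsDivisorial, divClosure, one_div_spanSingleton, inv_inv]

lemma IsDivisorial.divClosure_le (hB : IsDivisorial B) (h : A ≤ B) : divClosure A ≤ B :=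
  (divClosure_mono h).trans_eq hB

lemma divClosure_mul_le (A B : FractionalIdeal D⁰ K) :
    divClosure A * B ≤ divClosure (A * B) := by
  rcases eq_or_ne A 0 with rfl | hA
  · simp only [divClosure_zero, zero_mul, le_refl]
  rcases eq_or_ne B 0 with rfl | hB
  · simp only [mul_zero, FractionalIdeal.zero_le]
  have hAB : A * B ≠ 0 := mul_ne_zero hA hB
  have hle : B * (1 / (A * B)) ≤ 1 / A := by
    rw [le_div_iff_mul_le hA, mul_right_comm, mul_comm B A]
    exact mul_one_div_le_one
  refine (le_div_iff_mul_le (one_div_fractionalIdeal_ne_zero hAB)).2 ?_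
  calc divClosure A * B * (1 / (A * B)) = divClosure A * (B * (1 / (A * B))) := mul_assoc ..
    _ ≤ divClosure A * (1 / A) := by gcongr
    _ = 1 / A * (1 / (1 / A)) := mul_comm ..
    _ ≤ 1 := mul_one_div_le_one

lemma IsDivisorial.one_div_mul_one_div_le_div (hB : IsDivisorial B) (hA0 : A ≠ 0) (hB0 : B ≠ 0) :
    1 / (A * (1 / B)) ≤ B / A := by
  have hB' : 1 / B ≠ 0 := one_div_fractionalIdeal_ne_zero hB0
  have hle : 1 / (A * (1 / B)) * A ≤ 1 / (1 / B) := by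
    rw [le_div_iff_mul_le hB', mul_assoc, mul_comm]
    exact mul_one_div_le_one
  exact (le_div_iff_mul_le hA0).2 (hle.trans_eq hB)

lemma exists_coeIdeal_eq_divClosure (h : A ≤ 1) :
    ∃ B : Ideal D, (B : FractionalIdeal D⁰ K) = divClosure A :=
  le_one_iff_exists_coeIdeal.1 (isDivisorial_one.divClosure_le h)

lemma one_div_eq_divClosure_of_divClosure_mul_eq_one (hB : B ≠ 0) (h : divClosure (A * B) = 1) :
    1 / B = divClosure A := by
  apply le_antisymm
  · calc 1 / B = divClosure (A * B) * (1 / B) := by rw [h, one_mul]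
      _ ≤ divClosure (A * B * (1 / B)) := divClosure_mul_le ..
      _ = divClosure (A * (B * (1 / B))) := by rw [mul_assoc]
      _ ≤ divClosure (A * 1) := divClosure_mono (by gcongr; exact mul_one_div_le_one)
      _ = divClosure A := by rw [mul_one]
  · exact (isDivisorial_one_div B).divClosure_le
      ((le_div_iff_mul_le hB).2 ((le_divClosure _).trans_eq h))

end DivisorialClosure

section CompletelyIntegrallyClosed

variable {A B : FractionalIdeal D⁰ K}

lemma fractionalIdeal_le_one_of_mul_le (hc : completeIntegralClosure D K = ⊥) (hA : A ≠ 0)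
    (h : B * A ≤ A) : B ≤ 1 := by
  intro x hx
  obtain ⟨y, hy0, hy⟩ := exists_ne_zero_mem_isInteger hA
  obtain ⟨z, hz0, hz⟩ := exists_ne_zero_mem_isInteger (one_div_fractionalIdeal_ne_zero hA)
  have hpow (n : ℕ) : x ^ n * algebraMap D K y ∈ A := by
    induction n with
    | zero => simpa only [pow_zero, one_mul] using hy
    | succ n ih => simpa only [pow_succ', mul_assoc] using h (mul_mem_mul hx ih)
  have halmost : IsAlmostIntegral D x := by
    refine ⟨y * z, mem_nonZeroDivisors_of_ne_zero (mul_ne_zero hy0 hz0), fun n ↦ ?_⟩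
    obtain ⟨d, hd⟩ := (mem_one_iff _).1 (mul_one_div_le_one (mul_mem_mul (hpow n) hz))
    exact ⟨d, by rw [hd, Algebra.smul_def, map_mul]; ring⟩
  obtain ⟨d, hd⟩ := Algebra.mem_bot.1 (hc ▸ mem_completeIntegralClosure.2 halmost)
  exact (mem_one_iff _).2 ⟨d, hd⟩

lemma one_div_mul_one_div_le_one (hc : completeIntegralClosure D K = ⊥) (hA : A ≠ 0) :
    1 / (A * (1 / A)) ≤ 1 := by
  apply fractionalIdeal_le_one_of_mul_le hc (one_div_fractionalIdeal_ne_zero hA)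
  rw [le_div_iff_mul_le hA, mul_assoc, mul_comm (1 / A), mul_comm]
  exact mul_one_div_le_one

end CompletelyIntegrallyClosed

section MaximalDivisorial

variable {Q : Ideal D}

variable (K) in
/-- The maximal elements among the proper nonzero divisorial ideals of `D`. Excluding the zero
ideal only matters when `D` is a field. -/
def IsMaximalDivisorial (Q : Ideal D) : Prop :=
  Maximal (fun A : Ideal D ↦ A ≠ ⊥ ∧ A ≠ ⊤ ∧ IsDivisorial (A : FractionalIdeal D⁰ K)) Q

namespace IsMaximalDivisorial

lemma ne_bot (hQ : IsMaximalDivisorial K Q) : Q ≠ ⊥ := hQ.prop.1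

lemma ne_top (hQ : IsMaximalDivisorial K Q) : Q ≠ ⊤ := hQ.prop.2.1

lemma isDivisorial (hQ : IsMaximalDivisorial K Q) :
    IsDivisorial (Q : FractionalIdeal D⁰ K) := hQ.prop.2.2

lemma coe_ne_zero (hQ : IsMaximalDivisorial K Q) : (Q : FractionalIdeal D⁰ K) ≠ 0 :=
  coeIdeal_ne_zero.2 hQ.ne_bot

lemma eq_of_le {R : Ideal D} (hQ : IsMaximalDivisorial K Q) (hR : IsMaximalDivisorial K R)
    (h : Q ≤ R) : Q = R :=
  Maximal.eq_of_le hQ hR.prop h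

lemma divClosure_eq_one_of_lt {A : Ideal D} (hQ : IsMaximalDivisorial K Q) (h : Q < A) :
    divClosure (A : FractionalIdeal D⁰ K) = 1 := by
  obtain ⟨B, hB⟩ := exists_coeIdeal_eq_divClosure (A := (A : FractionalIdeal D⁰ K)) coeIdeal_le_one
  have hQB : Q < B := h.trans_le <| by
    rw [← coeIdeal_le_coeIdeal K, hB]
    exact le_divClosure _
  have hB_top : B = ⊤ := by
    by_contra hB_ne_top
    exact hQ.not_prop_of_gt hQB ⟨hQB.ne_bot, hB_ne_top, hB ▸ isDivisorial_divClosure _⟩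
  rw [← hB, hB_top, coeIdeal_top]

lemma isPrime (hQ : IsMaximalDivisorial K Q) : Q.IsPrime := by
  refine ⟨hQ.ne_top, fun {x y} hxy ↦ or_iff_not_imp_left.2 fun hx ↦ ?_⟩
  have hlt : Q < Q ⊔ Ideal.span {x} := by
    simpa only [left_lt_sup, Ideal.span_singleton_le_iff_mem] using hx
  have hmul : (Q ⊔ Ideal.span {x}) * Ideal.span {y} ≤ Q := by
    rw [Ideal.sup_mul, sup_le_iff, Ideal.span_singleton_mul_span_singleton,
      Ideal.span_singleton_le_iff_mem]
    exact ⟨Ideal.mul_le_left, hxy⟩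
  rw [← Ideal.span_singleton_le_iff_mem, ← coeIdeal_le_coeIdeal K]
  rw [← coeIdeal_le_coeIdeal K, coeIdeal_mul] at hmul
  simpa only [hQ.divClosure_eq_one_of_lt hlt, one_mul] using
    (divClosure_mul_le _ _).trans (hQ.isDivisorial.divClosure_le hmul)

lemma not_one_div_le_one (hQ : IsMaximalDivisorial K Q) :
    ¬ 1 / (Q : FractionalIdeal D⁰ K) ≤ 1 := by
  intro h
  have hle : 1 / 1 ≤ (Q : FractionalIdeal D⁰ K) :=
    (inv_anti_mono (one_div_fractionalIdeal_ne_zero hQ.coe_ne_zero) one_ne_zero h).trans_eq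
      hQ.isDivisorial
  rw [FractionalIdeal.div_one, ← coeIdeal_top, coeIdeal_le_coeIdeal, top_le_iff] at hle
  exact hQ.ne_top hle

lemma not_one_div_le_div (hQ : IsMaximalDivisorial K Q) (hc : completeIntegralClosure D K = ⊥)
    {A : FractionalIdeal D⁰ K} (hA : A ≠ 0) : ¬ 1 / A ≤ Q / A := by
  rw [le_div_iff_mul_le hA, mul_comm]
  intro h
  exact hQ.not_one_div_le_one <|
    (inv_anti_mono (mul_ne_zero hA (one_div_fractionalIdeal_ne_zero hA)) hQ.coe_ne_zero h).trans
      (one_div_mul_one_div_le_one hc hA)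

-- The witness is the divisorial closure of `A Q⁻¹`.
lemma exists_lt_mul_le (hQ : IsMaximalDivisorial K Q) (hc : completeIntegralClosure D K = ⊥)
    {A : Ideal D} (hA0 : A ≠ ⊥) (hA : IsDivisorial (A : FractionalIdeal D⁰ K)) (hAQ : A ≤ Q) :
    ∃ B : Ideal D, IsDivisorial (B : FractionalIdeal D⁰ K) ∧ A < B ∧ B * Q ≤ A := by
  set C : FractionalIdeal D⁰ K := A * (1 / Q) with hC
  have hC_le_one : C ≤ 1 :=
    calc C ≤ Q * (1 / Q) := by rw [hC]; gcongr
      _ ≤ 1 := mul_one_div_le_one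
  obtain ⟨B, hB⟩ := exists_coeIdeal_eq_divClosure hC_le_one
  have hCB : C ≤ B := hB ▸ le_divClosure C
  refine ⟨B, hB ▸ isDivisorial_divClosure C, lt_of_le_of_ne ?_ ?_, ?_⟩
  · have hone : (1 : FractionalIdeal D⁰ K) ≤ 1 / Q := by
      rw [le_div_iff_mul_le hQ.coe_ne_zero, one_mul]
      exact coeIdeal_le_one
    rw [← coeIdeal_le_coeIdeal K]
    calc (A : FractionalIdeal D⁰ K) = A * 1 := (mul_one _).symm
      _ ≤ C := by rw [hC]; gcongr
      _ ≤ B := hCB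
  · rintro rfl
    refine hQ.not_one_div_le_one (fractionalIdeal_le_one_of_mul_le hc (coeIdeal_ne_zero.2 hA0) ?_)
    rwa [mul_comm]
  · rw [← coeIdeal_le_coeIdeal K, coeIdeal_mul, hB]
    refine (divClosure_mul_le C Q).trans (hA.divClosure_le ?_)
    calc C * Q = A * (Q * (1 / Q)) := by rw [hC]; ring
      _ ≤ A * 1 := by gcongr; exact mul_one_div_le_one
      _ = A := mul_one _

end IsMaximalDivisorial

lemma smul_mem_coeIdeal_div_iff (hQ : Q.IsPrime) {I : FractionalIdeal D⁰ K} (hI : I ≠ 0) {t : D}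
    {y : K} (hy : y ∈ 1 / I) : t • y ∈ Q / I ↔ t ∈ Q ∨ y ∈ Q / I := by
  rw [mem_div_iff_of_ne_zero hI] at hy
  simp only [mem_div_iff_of_ne_zero hI, Algebra.smul_def, mul_assoc]
  constructor
  · refine fun h ↦ or_iff_not_imp_left.2 fun ht i hi ↦ ?_
    obtain ⟨d, hd⟩ := (mem_one_iff _).1 (hy i hi)
    have htd := h i hi
    rw [← hd, ← map_mul, algebraMap_mem_coeIdeal] at htd
    rw [← hd, algebraMap_mem_coeIdeal]
    exact (hQ.mem_or_mem htd).resolve_left ht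
  · intro h i hi
    obtain ⟨d, hd⟩ := (mem_one_iff _).1 (hy i hi)
    rw [← hd, ← map_mul, algebraMap_mem_coeIdeal]
    rcases h with ht | hyQ
    · exact Ideal.mul_mem_right _ _ ht
    · exact Ideal.mul_mem_left _ _ (algebraMap_mem_coeIdeal.1 (hd ▸ hyQ i hi))

lemma exists_mem_one_div_forall_notMem_div (hc : completeIntegralClosure D K = ⊥)
    {I : FractionalIdeal D⁰ K} (hI : I ≠ 0) (S : Finset (Ideal D))
    (hS : ∀ Q ∈ S, IsMaximalDivisorial K Q) : ∃ b ∈ 1 / I, ∀ Q ∈ S, b ∉ Q / I := by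
  classical
  induction S using Finset.induction_on with
  | empty => exact ⟨0, zero_mem _, by simp⟩
  | insert Q S hQS ih =>
    simp only [Finset.forall_mem_insert] at hS ⊢
    obtain ⟨hQ, hS⟩ := hS
    obtain ⟨b, hb, hbS⟩ := ih hS
    by_cases hbQ : b ∉ Q / I
    · exact ⟨b, hb, hbQ, hbS⟩
    rw [not_not] at hbQ
    obtain ⟨y, hy, hyQ⟩ := SetLike.not_le_iff_exists.1 (hQ.not_one_div_le_div hc hI)
    have hprod : ¬ ∏ R ∈ S, R ≤ Q := by
      rw [hQ.isPrime.prod_le]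
      rintro ⟨R, hR, hRQ⟩
      exact hQS ((hS R hR).eq_of_le hQ hRQ ▸ hR)
    obtain ⟨t, ht, htQ⟩ := SetLike.not_le_iff_exists.1 hprod
    -- Passing from `b` to `b + t • y` changes nothing modulo `R ∈ S`, as `t ∈ R`.
    refine ⟨b + t • y, Submodule.add_mem _ hb (Submodule.smul_mem _ t hy), ?_, fun R hR ↦ ?_⟩
    · rw [← mem_coe, Submodule.add_mem_iff_right _ hbQ, mem_coe,
        smul_mem_coeIdeal_div_iff hQ.isPrime hI hy]
      exact not_or.2 ⟨htQ, hyQ⟩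
    · have htR : t ∈ R := (Ideal.prod_le_inf.trans (Finset.inf_le hR)) ht
      have htyR : t • y ∈ R / I :=
        (smul_mem_coeIdeal_div_iff (hS R hR).isPrime hI hy).2 (.inl htR)
      rw [← mem_coe, Submodule.add_mem_iff_left _ htyR, mem_coe]
      exact hbS R hR

end MaximalDivisorial

section AscendingChainCondition

variable (D K) in
/-- The integral divisorial ideals of `D`, ordered by inclusion; the Mori condition on `D` is
`WellFoundedGT (DivisorialIdeal D K)`. -/
abbrev DivisorialIdeal : Type _ :=
  {A : Ideal D // IsDivisorial (A : FractionalIdeal D⁰ K)}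

variable [WellFoundedGT (DivisorialIdeal D K)]

lemma exists_le_isMaximalDivisorial {A : Ideal D} (hA_bot : A ≠ ⊥) (hA_top : A ≠ ⊤)
    (hA : IsDivisorial (A : FractionalIdeal D⁰ K)) : ∃ Q, IsMaximalDivisorial K Q ∧ A ≤ Q := by
  obtain ⟨Q, ⟨hAQ, hQ_top⟩, hmax⟩ := wellFounded_gt.has_min
    {B : DivisorialIdeal D K | A ≤ B.1 ∧ B.1 ≠ ⊤} ⟨⟨A, hA⟩, le_rfl, hA_top⟩
  refine ⟨Q.1, ⟨⟨ne_bot_of_le_ne_bot hA_bot hAQ, hQ_top, Q.2⟩, ?_⟩, hAQ⟩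
  rintro B ⟨-, hB_top, hB⟩ hQB
  by_contra hBQ
  exact hmax ⟨B, hB⟩ ⟨hAQ.trans hQB, hB_top⟩ (lt_of_le_not_ge hQB hBQ)

lemma divClosure_eq_one_of_forall_not_le {A : FractionalIdeal D⁰ K} (hA : A ≠ 0) (hA_le : A ≤ 1)
    (h : ∀ Q : Ideal D, IsMaximalDivisorial K Q → ¬ A ≤ Q) : divClosure A = 1 := by
  obtain ⟨B, hB⟩ := exists_coeIdeal_eq_divClosure hA_le
  have hB_bot : B ≠ ⊥ := by
    rw [← coeIdeal_ne_zero (K := K), hB]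
    exact divClosure_ne_zero hA
  by_contra hne
  have hB_top : B ≠ ⊤ := by
    rintro rfl
    exact hne (by rw [← hB, coeIdeal_top])
  obtain ⟨Q, hQ, hBQ⟩ :=
    exists_le_isMaximalDivisorial hB_bot hB_top (hB ▸ isDivisorial_divClosure A)
  refine h Q hQ ((le_divClosure A).trans ?_)
  rwa [← hB, coeIdeal_le_coeIdeal]

lemma exists_multiset_prod_le (hc : completeIntegralClosure D K = ⊥) (A : DivisorialIdeal D K)
    (hA : A.1 ≠ ⊥) :
    ∃ s : Multiset (Ideal D), (∀ Q ∈ s, IsMaximalDivisorial K Q) ∧ s.prod ≤ A.1 := by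
  induction A using WellFoundedGT.induction with
  | ind A ih =>
  by_cases hA_top : A.1 = ⊤
  · exact ⟨0, by simp, hA_top ▸ le_top⟩
  obtain ⟨Q, hQ, hAQ⟩ := exists_le_isMaximalDivisorial hA hA_top A.2
  obtain ⟨B, hB, hAB, hBQ⟩ := hQ.exists_lt_mul_le hc hA A.2 hAQ
  obtain ⟨s, hs, hsB⟩ := ih ⟨B, hB⟩ hAB hAB.ne_bot
  refine ⟨Q ::ₘ s, Multiset.forall_mem_cons.2 ⟨hQ, hs⟩, ?_⟩
  rw [Multiset.prod_cons, mul_comm]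
  exact (Ideal.mul_mono_left hsB).trans hBQ

lemma exists_multiset_isMaximalDivisorial_le_of_isPrime (hc : completeIntegralClosure D K = ⊥)
    {A : Ideal D} (hA : A ≠ ⊥) :
    ∃ s : Multiset (Ideal D), (∀ Q ∈ s, IsMaximalDivisorial K Q) ∧
      ∀ P : Ideal D, P.IsPrime → A ≤ P → ∃ Q ∈ s, Q ≤ P := by
  obtain ⟨x, hxA, hx0⟩ := Submodule.exists_mem_ne_zero_of_ne_bot hA
  obtain ⟨s, hs, hsx⟩ := exists_multiset_prod_le (K := K) hc
    ⟨Ideal.span {x}, by rw [coeIdeal_span_singleton]; exact isDivisorial_spanSingleton _⟩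
    (Ideal.span_singleton_eq_bot.not.2 hx0)
  refine ⟨s, hs, fun P hP hAP ↦ hP.multiset_prod_le.1 (hsx.trans ?_)⟩
  exact (Ideal.span_singleton_le_iff_mem _).2 (hAP hxA)

lemma finite_setOf_isMaximalDivisorial_and_le (hc : completeIntegralClosure D K = ⊥)
    {A : Ideal D} (hA : A ≠ ⊥) : {Q : Ideal D | IsMaximalDivisorial K Q ∧ A ≤ Q}.Finite := by
  classical
  obtain ⟨s, hs, hsP⟩ := exists_multiset_isMaximalDivisorial_le_of_isPrime hc hA
  refine s.toFinset.finite_toSet.subset ?_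
  rintro Q ⟨hQ, hAQ⟩
  obtain ⟨R, hR, hRQ⟩ := hsP Q hQ.isPrime hAQ
  rw [Finset.mem_coe, Multiset.mem_toFinset, ← (hs R hR).eq_of_le hQ hRQ]
  exact hR

lemma IsHeightOnePrime.isMaximalDivisorial (hc : completeIntegralClosure D K = ⊥) {P : Ideal D}
    (hP : IsHeightOnePrime P) : IsMaximalDivisorial K P := by
  obtain ⟨hP_prime, hP_bot, hP_min⟩ := hP
  obtain ⟨s, hs, hsP⟩ := exists_multiset_isMaximalDivisorial_le_of_isPrime (K := K) hc hP_bot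
  obtain ⟨Q, hQs, hQP⟩ := hsP P hP_prime le_rfl
  have hQ := hs Q hQs
  exact hP_min Q hQ.isPrime hQ.ne_bot hQP ▸ hQ

lemma exists_one_div_eq_divClosure_sup (hc : completeIntegralClosure D K = ⊥)
    {I : FractionalIdeal D⁰ K} (hI : I ≠ 0) {a : K} (ha0 : a ≠ 0) (ha : a ∈ 1 / I) :
    ∃ b ∈ 1 / I, 1 / I = divClosure (spanSingleton D⁰ a ⊔ spanSingleton D⁰ b) ∧
      ∀ Q : Ideal D, IsMaximalDivisorial K Q → a ∈ Q / I → b ∉ Q / I := by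
  have hspan_mul_le {x : K} {J : FractionalIdeal D⁰ K} :
      spanSingleton D⁰ x * I ≤ J ↔ x ∈ J / I := by
    rw [← le_div_iff_mul_le hI, spanSingleton_le_iff_mem]
  obtain ⟨A, hA⟩ := le_one_iff_exists_coeIdeal.1 (hspan_mul_le.2 ha)
  have hA_bot : A ≠ ⊥ := by
    rw [← coeIdeal_ne_zero (K := K), hA]
    exact mul_ne_zero (spanSingleton_ne_zero_iff.2 ha0) hI
  have hA_le {Q : Ideal D} : A ≤ Q ↔ a ∈ Q / I := by
    rw [← coeIdeal_le_coeIdeal K, hA, hspan_mul_le]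
  have hfin := finite_setOf_isMaximalDivisorial_and_le (K := K) hc hA_bot
  simp only [hA_le] at hfin
  obtain ⟨b, hb, hbQ⟩ := exists_mem_one_div_forall_notMem_div hc hI hfin.toFinset
    fun Q hQ ↦ (hfin.mem_toFinset.1 hQ).1
  replace hbQ (Q : Ideal D) (hQ : IsMaximalDivisorial K Q) (haQ : a ∈ Q / I) : b ∉ Q / I :=
    hbQ Q (hfin.mem_toFinset.2 ⟨hQ, haQ⟩)
  refine ⟨b, hb, one_div_eq_divClosure_of_divClosure_mul_eq_one hI ?_, hbQ⟩
  set G := spanSingleton D⁰ a ⊔ spanSingleton D⁰ b with hG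
  have hG0 : G ≠ 0 := ne_bot_of_le_ne_bot (spanSingleton_ne_zero_iff.2 ha0) le_sup_left
  have hGI_le {J : FractionalIdeal D⁰ K} : G * I ≤ J ↔ a ∈ J / I ∧ b ∈ J / I := by
    rw [← le_div_iff_mul_le hI, hG, sup_le_iff, spanSingleton_le_iff_mem,
      spanSingleton_le_iff_mem]
  refine divClosure_eq_one_of_forall_not_le (mul_ne_zero hG0 hI) (hGI_le.2 ⟨ha, hb⟩) ?_
  intro Q hQ hle
  obtain ⟨haQ, hbQ'⟩ := hGI_le.1 hle
  exact hbQ Q hQ haQ hbQ'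

end AscendingChainCondition

section Valuation

variable {P : Ideal D} {I : FractionalIdeal D⁰ K} {a b : K}

lemma div_mem_primeLocSet (hI : I ≠ 0) (ha : a ∈ P / I) (hb : b ∈ 1 / I) (hbP : b ∉ P / I) :
    a / b ∈ primeLocSet D K P := by
  rw [mem_div_iff_of_ne_zero hI] at ha hb hbP
  push Not at hbP
  obtain ⟨i, hi, hbi⟩ := hbP
  obtain ⟨p, hp, hpa⟩ := (mem_coeIdeal _).1 (ha i hi)
  obtain ⟨d, hd⟩ := (mem_one_iff _).1 (hb i hi)
  have hb0 : b ≠ 0 := by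
    rintro rfl
    exact hbi (by rw [zero_mul]; exact zero_mem _)
  refine ⟨p, hp, d, ?_, by rw [hpa, hd]; field_simp⟩
  rwa [← hd, algebraMap_mem_coeIdeal] at hbi

/-- The factors `y` and `z` contribute at least `2` to `v_P(b y z I P⁻¹)`, of which `P⁻¹` takes away
only `1`. -/
lemma mul_mem_div_of_mem_primeLocSet (hP : P.IsPrime) (hP0 : P ≠ ⊥) (hI : I ≠ 0)
    (hb : b ∈ 1 / I) {y z : K} (hy : y ∈ primeLocSet D K P) (hz : z ∈ primeLocSet D K P)
    (hbyz : b * (y * z) ∈ 1 / (I * (1 / P))) : b * (y * z) ∈ P / (I * (1 / P)) := by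
  obtain ⟨p, hp, s, hs, hsy⟩ := hy
  obtain ⟨q, hq, t, ht, htz⟩ := hz
  have hP0' : (P : FractionalIdeal D⁰ K) ≠ 0 := coeIdeal_ne_zero.2 hP0
  have hIP : I * (1 / P) ≠ 0 := mul_ne_zero hI (one_div_fractionalIdeal_ne_zero hP0')
  rw [← spanSingleton_le_iff_mem, le_div_iff_mul_le hIP, ← mul_assoc, FractionalIdeal.mul_le]
  intro _ hw r hr
  obtain ⟨i, hi, rfl⟩ := mem_singleton_mul.1 hw
  obtain ⟨d, hd⟩ := (mem_one_iff _).1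
    ((mem_div_iff_of_ne_zero hIP).1 hbyz _ (mul_mem_mul hi hr))
  obtain ⟨e, he⟩ := (mem_one_iff _).1 ((mem_div_iff_of_ne_zero hI).1 hb i hi)
  obtain ⟨f, hf⟩ := (mem_one_iff _).1
    ((mem_div_iff_of_ne_zero hP0').1 hr _ (algebraMap_mem_coeIdeal.2 hq))
  have hstd : s * t * d = p * (e * f) := by
    apply IsFractionRing.injective D K
    simp only [map_mul, hd, he, hf, ← hsy, ← htz]
    ring
  have hmem : s * t * d ∈ P := hstd ▸ Ideal.mul_mem_right _ _ hp
  rw [mul_assoc, ← hd, algebraMap_mem_coeIdeal]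
  exact (hP.mem_or_mem hmem).resolve_left (hP.mul_notMem hs ht)

/-- The hypotheses on `a` encode `v_P(aI) = 1`, those on `b` encode `v_P(bI) = 0`. -/
lemma valOneAt_div (hP : P.IsPrime) (hP0 : P ≠ ⊥) (hI : I ≠ 0) (haI : a ∈ P / I)
    (ha : a ∈ 1 / (I * (1 / P))) (haP : a ∉ P / (I * (1 / P))) (hb : b ∈ 1 / I)
    (hbP : b ∉ P / I) : valOneAt D P (a / b) := by
  refine ⟨div_mem_primeLocSet hI haI hb hbP, ?_⟩
  rintro ⟨y, hy, z, hz, hyz⟩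
  have hb0 : b ≠ 0 := by
    rintro rfl
    exact hbP (zero_mem _)
  have hab : a = b * (y * z) := by rw [← hyz, mul_div_cancel₀ _ hb0]
  subst hab
  exact haP (mul_mem_div_of_mem_primeLocSet hP hP0 hI hb hy hz ha)

end Valuation

namespace IsKrullDomain

variable (K) in
lemma completeIntegralClosure_eq_bot (hD : IsKrullDomain D) : completeIntegralClosure D K = ⊥ := by
  rw [eq_bot_iff]
  rintro x ⟨c, hc, hx⟩
  let e := FractionRing.algEquiv D K
  obtain ⟨d, hd⟩ := hD.1 (e.symm x) ⟨c, nonZeroDivisors.ne_zero hc, fun n ↦ by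
    obtain ⟨d, hd⟩ := hx n
    exact ⟨d, e.injective (by simp [hd, Algebra.smul_def])⟩⟩
  exact Algebra.mem_bot.2 ⟨d, e.symm.injective (by simp [← hd])⟩

variable (K) in
lemma wellFoundedGT_divisorialIdeal (hD : IsKrullDomain D) :
    WellFoundedGT (DivisorialIdeal D K) := by
  rw [wellFoundedGT_iff_monotone_chain_condition]
  intro f
  let e := (FractionRing.algEquiv D K).symm
  have hdiv (n : ℕ) :
      IsDivisorial ((f n).1 : FractionalIdeal D⁰ (FractionRing D)) := by
    have hmap := congrArg (FractionalIdeal.map (e : K →ₐ[D] FractionRing D)) (f n).2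
    rwa [divClosure, map_one_div, map_one_div, map_coeIdeal] at hmap
  obtain ⟨n, hn⟩ := hD.2 (fun n ↦ (f n).1) hdiv fun n ↦ f.monotone n.le_succ
  exact ⟨n, fun m hm ↦ Subtype.ext (hn m hm).symm⟩

end IsKrullDomain

theorem approximation_lemma_infinite_general (hD : IsKrullDomain D) {P : Ideal D}
    (hP : IsHeightOnePrime P) {I : FractionalIdeal D⁰ K} (hI : I ≠ 0) :
    ∃ a b : K, 1 / I = divClosure (spanSingleton D⁰ a ⊔ spanSingleton D⁰ b) ∧
      valOneAt D P (a / b) := by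
  have hc := hD.completeIntegralClosure_eq_bot K
  have := hD.wellFoundedGT_divisorialIdeal K
  have hPmax : IsMaximalDivisorial K P := hP.isMaximalDivisorial hc
  have hIP : I * (1 / P) ≠ 0 :=
    mul_ne_zero hI (one_div_fractionalIdeal_ne_zero hPmax.coe_ne_zero)
  obtain ⟨a, ha, haP⟩ := SetLike.not_le_iff_exists.1 (hPmax.not_one_div_le_div hc hIP)
  have ha0 : a ≠ 0 := by
    rintro rfl
    exact haP (zero_mem _)
  have haI : a ∈ P / I :=
    hPmax.isDivisorial.one_div_mul_one_div_le_div hI hPmax.coe_ne_zero ha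
  have haI_one : a ∈ 1 / I :=
    (mem_div_iff_of_ne_zero hI).2 fun i hi ↦
      coeIdeal_le_one ((mem_div_iff_of_ne_zero hI).1 haI i hi)
  obtain ⟨b, hb, hab, hbQ⟩ := exists_one_div_eq_divClosure_sup hc hI ha0 haI_one
  exact ⟨a, b, hab, valOneAt_div hP.1 hPmax.ne_bot hI haI ha haP hb (hbQ P hPmax haI)⟩

end

/-- **Lemma (second part).** Let `D` be a Krull domain with quotient field `K ≠ D` that is
not semi-local (i.e. `D` has infinitely many height-one prime ideals), and `I` a nonzero
divisorial fractional ideal of `D`. Then there are infinitely many height-one primes `P`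
of `D` for which there exist `a, b ∈ K` with `I⁻¹ = (aD + bD)_v` and `v_P(a/b) = 1`. -/
theorem approximation_lemma_infinite {D K : Type*} [CommRing D] [IsDomain D] [Field K]
    [Algebra D K] [IsFractionRing D K]
    (hD : IsKrullDomain D) (hDK : ¬ Function.Surjective (algebraMap D K))
    (hinf : {P : Ideal D | IsHeightOnePrime P}.Infinite)
    (I : FractionalIdeal D⁰ K) (hI0 : I ≠ 0) (hIv : divClosure I = I) :
    {P : Ideal D | IsHeightOnePrime P ∧ ∃ a b : K,
      1 / I = divClosure (FractionalIdeal.spanSingleton D⁰ a ⊔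
        FractionalIdeal.spanSingleton D⁰ b) ∧
      valOneAt D P (a / b)}.Infinite :=
  hinf.mono fun _ hP ↦ ⟨hP, approximation_lemma_infinite_general hD hP hI0⟩

end
end

section
/- Let K be a field, S a reduced torsion-free Krull monoid with quotient group G, P a height-one prime ideal of S with associated P-adic valuation v_P : G → ℤ, and a ∈ S with v_P(a) = 1. Let g_1, …, g_n ∈ G with v_P(g_1) = … = v_P(g_n) = 0. Then the element g = X^{g_1} + … + X^{g_n} + X^{g_n + a} is irreducible in the group algebra K[G]. -/
open scoped nonZeroDivisors

noncomputable section

/-- The dual `(S : X) = {g : G | g + X ⊆ S}` of a subset `X` of the quotient group,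
with respect to a submonoid `S`. -/
def monDual {G : Type*} [AddCommGroup G] (S : AddSubmonoid G) (X : Set G) : Set G :=
  {g : G | ∀ x ∈ X, g + x ∈ S}

/-- A Krull monoid (given as a submonoid of an abelian group which is its quotient group):
completely integrally closed and ACC on divisorial ideals. -/
def IsKrullMonoid {G : Type*} [AddCommGroup G] (S : AddSubmonoid G) : Prop :=
  (∀ g : G, (∃ c ∈ S, ∀ n : ℕ, c + n • g ∈ S) → g ∈ S) ∧
  (∀ f : ℕ → Set G, (∀ n, f n ⊆ (S : Set G)) → (∀ n, monDual S (monDual S (f n)) = f n) →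
      (∀ n, f n ⊆ f (n + 1)) → ∃ n, ∀ m, n ≤ m → f m = f n)

/-- For subsets `A ⊆ K` and `E ⊆ G`, the set `A[E]` of all finite sums
`Σ pᵢ X^{hᵢ}` with `pᵢ ∈ A` and `hᵢ ∈ E`, inside the monoid algebra `K[G]`. -/
def mixedSpan {K G : Type*} [Semiring K] [AddCommMonoid G] (A : Set K) (E : Set G) :
    Set (AddMonoidAlgebra K G) :=
  {x | ∃ (n : ℕ) (p : Fin n → K) (h : Fin n → G),
    (∀ i, p i ∈ A) ∧ (∀ i, h i ∈ E) ∧ x = ∑ i, AddMonoidAlgebra.single (h i) (p i)}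

/-- The localization `S_P = {s - t : s ∈ S, t ∈ S \ P}` of `S` at a prime ideal `P`,
as a subset of the ambient group. -/
def monLoc {G : Type*} [AddCommGroup G] (S : AddSubmonoid G) (P : Set G) : Set G :=
  {x : G | ∃ s ∈ S, ∃ t ∈ S, t ∉ P ∧ x = s - t}

/-- The maximal ideal `P + S_P` of the localization `S_P`, as a subset of the ambient
group. -/
def monLocMax {G : Type*} [AddCommGroup G] (S : AddSubmonoid G) (P : Set G) : Set G :=
  {x : G | ∃ u ∈ P, ∃ w ∈ monLoc S P, x = u + w}

/-- `v_P(x) = 0` for the normalized `P`-adic valuation: `x` is a unit of the localization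
`S_P`. -/
def mvalZero {G : Type*} [AddCommGroup G] (S : AddSubmonoid G) (P : Set G) (x : G) : Prop :=
  x ∈ monLoc S P ∧ -x ∈ monLoc S P

/-- `v_P(x) = 1` for the normalized `P`-adic valuation: `x ∈ P·S_P` but `x` is not a sum of
two elements of `P·S_P`. -/
def mvalOne {G : Type*} [AddCommGroup G] (S : AddSubmonoid G) (P : Set G) (x : G) : Prop :=
  x ∈ monLocMax S P ∧ ¬ ∃ y ∈ monLocMax S P, ∃ z ∈ monLocMax S P, x = y + z

/-- `v_P(x) ≥ 2` for the normalized `P`-adic valuation: `x` is a sum of two elements of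
`P·S_P`. -/
def mvalGeTwo {G : Type*} [AddCommGroup G] (S : AddSubmonoid G) (P : Set G) (x : G) : Prop :=
  ∃ y ∈ monLocMax S P, ∃ z ∈ monLocMax S P, x = y + z

/-- A (proper) prime ideal of the monoid `S`. -/
def IsMonoidPrimeIdeal {G : Type*} [AddCommGroup G] (S : AddSubmonoid G) (P : Set G) :
    Prop :=
  P ⊆ (S : Set G) ∧ (∀ p ∈ P, ∀ s ∈ S, p + s ∈ P) ∧ P ≠ (S : Set G) ∧
    ∀ a ∈ S, ∀ b ∈ S, a + b ∈ P → a ∈ P ∨ b ∈ P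

/-- A height-one prime ideal of the monoid `S`: a nonempty prime ideal that is minimal
among nonempty prime ideals. -/
def IsMonoidHeightOnePrime {G : Type*} [AddCommGroup G] (S : AddSubmonoid G) (P : Set G) :
    Prop :=
  IsMonoidPrimeIdeal S P ∧ P.Nonempty ∧
    ∀ Q : Set G, IsMonoidPrimeIdeal S Q → Q.Nonempty → Q ⊆ P → Q = P

/-!
Write `v : G → ℤ` for the `P`-adic valuation. Its kernel `U` together with any `b` satisfying
`v b = 1` splits the group as `G ≃ ℤ × U`, which identifies `K[G]` with the Laurent polynomial ring
`K[U][T; T⁻¹]`, where `T` corresponds to `X^b`. Choosing `b = gₙ + a`, the element in question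
becomes `f + T` with `0 ≠ f ∈ K[U]`. Since `T + f` is prime in `K[U][T]` and divides no power of
`T`, it stays prime after inverting `T`; in particular it is irreducible.

To obtain `v`, one uses the chain condition to write `P` as `{x ∈ S | x + c ∈ S}` for some
`c ∈ G`. Complete integral closedness then gives `π ∈ P` with `π + c ∉ P`, and this `π` generates
the maximal ideal of `S_P`.
-/

section PrimeIdeal

variable {G : Type*} [AddCommGroup G] {S : AddSubmonoid G} {P : Set G}

namespace IsMonoidPrimeIdeal

theorem zero_notMem (hP : IsMonoidPrimeIdeal S P) : (0 : G) ∉ P := fun h0 =>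
  hP.2.2.1 (hP.1.antisymm fun s hs => by simpa using hP.2.1 0 h0 s hs)

theorem add_notMem (hP : IsMonoidPrimeIdeal S P) {s t : G} (hs : s ∈ S) (ht : t ∈ S)
    (hsP : s ∉ P) (htP : t ∉ P) : s + t ∉ P :=
  fun h => (hP.2.2.2 s hs t ht h).elim hsP htP

/-- The localization `S_P` of `S` at the prime ideal `P`, as a submonoid of the ambient group; its
carrier is `monLoc S P`. -/
def localization (hP : IsMonoidPrimeIdeal S P) : AddSubmonoid G where
  carrier := monLoc S P
  zero_mem' := ⟨0, S.zero_mem, 0, S.zero_mem, hP.zero_notMem, by simp⟩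
  add_mem' := by
    rintro _ _ ⟨s, hs, t, ht, htP, rfl⟩ ⟨s', hs', t', ht', htP', rfl⟩
    exact ⟨s + s', S.add_mem hs hs', t + t', S.add_mem ht ht', hP.add_notMem ht ht' htP htP',
      by abel⟩

theorem le_localization (hP : IsMonoidPrimeIdeal S P) : S ≤ hP.localization :=
  fun s hs => ⟨s, hs, 0, S.zero_mem, hP.zero_notMem, by simp⟩

theorem neg_mem_localization (hP : IsMonoidPrimeIdeal S P) {t : G} (ht : t ∈ S) (htP : t ∉ P) :
    -t ∈ hP.localization :=
  ⟨0, S.zero_mem, t, ht, htP, by simp⟩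

theorem neg_notMem_localization (hP : IsMonoidPrimeIdeal S P) {p : G} (hp : p ∈ P) :
    -p ∉ hP.localization := by
  rintro ⟨s, hs, t, -, htP, h⟩
  have ht : t = p + s := neg_add_eq_iff_eq_add.1 (eq_sub_iff_add_eq.1 h)
  exact htP (ht ▸ hP.2.1 p hp s hs)

theorem mem_monLocMax_iff (hP : IsMonoidPrimeIdeal S P) {x : G} :
    x ∈ monLocMax S P ↔ x ∈ hP.localization ∧ -x ∉ hP.localization := by
  constructor
  · rintro ⟨p, hp, w, hw, rfl⟩
    have hw : w ∈ hP.localization := hw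
    refine ⟨add_mem (hP.le_localization (hP.1 hp)) hw, fun hneg => ?_⟩
    exact hP.neg_notMem_localization hp (by simpa using add_mem hw hneg)
  · rintro ⟨⟨s, hs, t, ht, htP, rfl⟩, hneg⟩
    have hsP : s ∈ P := by
      by_contra hsP
      exact hneg ⟨t, ht, s, hs, hsP, by abel⟩
    exact ⟨s, hsP, -t, hP.neg_mem_localization ht htP, by abel⟩

end IsMonoidPrimeIdeal

theorem IsMonoidHeightOnePrime.exists_nsmul_sub_mem_localization
    (hP : IsMonoidHeightOnePrime S P) {p : G} (hp : p ∈ P) {x : G} (hx : x ∈ S) :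
    ∃ k : ℕ, k • p - x ∈ hP.1.localization := by
  obtain ⟨hprime, -, hmin⟩ := hP
  by_contra! hxk
  -- The elements dividing no multiple of `p` in `S_P` form a prime ideal inside `P` missing `p`.
  let Q : Set G := {y | y ∈ S ∧ ∀ k : ℕ, k • p - y ∉ hprime.localization}
  have hpQ : p ∉ Q := fun h => h.2 1 (by simp)
  have hQ : IsMonoidPrimeIdeal S Q := by
    refine ⟨fun y hy => hy.1, fun y hy s hs => ⟨S.add_mem hy.1 hs, fun k hk => hy.2 k ?_⟩,
      fun h => hpQ (h ▸ hprime.1 hp), fun y hy z hz hyz => ?_⟩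
    · convert add_mem hk (hprime.le_localization hs) using 1
      abel
    · by_contra! hyzQ
      simp only [Q, Set.mem_ofPred_eq, hy, hz, true_and, not_forall, not_not] at hyzQ
      obtain ⟨⟨k, hk⟩, l, hl⟩ := hyzQ
      refine hyz.2 (k + l) ?_
      convert add_mem hk hl using 1
      rw [add_nsmul]
      abel
  have hQP : Q ⊆ P := fun y hy => by
    by_contra hyP
    exact hy.2 0 (by simpa using hprime.neg_mem_localization hy.1 hyP)
  exact hpQ (hmin Q hQ ⟨x, hx, hxk⟩ hQP ▸ hp)

end PrimeIdeal

section Krull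

variable {G : Type*} [AddCommGroup G] {S : AddSubmonoid G} {P : Set G}

/-- The ideal `S ∩ (S - c)` of `S`, the divisorial ideal of all elements of `S` that translation
by `c` keeps in `S`. -/
def colon (S : AddSubmonoid G) (c : G) : Set G := {x | x ∈ S ∧ x + c ∈ S}

theorem monDual_monDual_colon (c : G) : monDual S (monDual S (colon S c)) = colon S c := by
  ext x
  refine ⟨fun hx => ⟨?_, hx c fun y hy => add_comm y c ▸ hy.2⟩,
    fun hx y hy => add_comm y x ▸ hy x hx⟩
  simpa using hx 0 fun y hy => by simpa using hy.1

theorem colon_subset_colon_add {c t : G} (ht : t ∈ S) : colon S c ⊆ colon S (t + c) :=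
  fun x hx => ⟨hx.1, by simpa [add_left_comm] using S.add_mem ht hx.2⟩

theorem IsKrullMonoid.wellFounded_colon (hS : IsKrullMonoid S) :
    WellFounded fun c d : G => colon S d ⊂ colon S c := by
  refine wellFounded_iff_isEmpty_descending_chain.2 ⟨fun ⟨c, hc⟩ => ?_⟩
  obtain ⟨n, hn⟩ := hS.2 (fun n => colon S (c n)) (fun _ _ hx => hx.1)
    (fun n => monDual_monDual_colon (c n)) fun n => (hc n).subset
  exact (hc n).ne (hn (n + 1) n.le_succ).symm

theorem IsMonoidPrimeIdeal.colon_of_maximal (hP : IsMonoidPrimeIdeal S P) {c : G}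
    (hcP : colon S c ⊆ P)
    (hmax : ∀ d, colon S d ⊆ P → colon S c ⊆ colon S d → colon S d ⊆ colon S c) :
    IsMonoidPrimeIdeal S (colon S c) := by
  refine ⟨fun x hx => hx.1, fun x hx s hs => ⟨S.add_mem hx.1 hs, ?_⟩,
    fun h => hP.zero_notMem (hcP (h ▸ S.zero_mem)), fun x hx y hy hxy => ?_⟩
  · simpa [add_right_comm] using S.add_mem hx.2 hs
  by_cases hxc : colon S (x + c) ⊆ P
  · right
    exact hmax _ hxc (colon_subset_colon_add hx)
      ⟨hy, by simpa only [add_left_comm, add_assoc] using hxy.2⟩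
  · left
    obtain ⟨t, ⟨ht, htxc⟩, htP⟩ := Set.not_subset.1 hxc
    have htc : colon S (t + c) ⊆ P := fun z ⟨hz, hztc⟩ =>
      (hP.2.2.2 z hz t ht (hcP ⟨S.add_mem hz ht, by rwa [add_assoc]⟩)).resolve_right htP
    exact hmax _ htc (colon_subset_colon_add ht) ⟨hx, by rwa [add_left_comm]⟩

theorem IsMonoidHeightOnePrime.exists_eq_colon (hP : IsMonoidHeightOnePrime S P)
    (hS : IsKrullMonoid S) : ∃ c, P = colon S c := by
  obtain ⟨hprime, ⟨p, hp⟩, hmin⟩ := hP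
  obtain ⟨c, ⟨hcP, hpc⟩, hmax⟩ := hS.wellFounded_colon.has_min {c | colon S c ⊆ P ∧ p ∈ colon S c}
    ⟨-p, fun x hx => by simpa using hprime.2.1 p hp _ hx.2, hprime.1 hp, by simp⟩
  refine ⟨c, (hmin _ (hprime.colon_of_maximal hcP fun d hdP hcd => ?_) ⟨p, hpc⟩ hcP).symm⟩
  by_contra hdc
  exact hmax d ⟨hdP, hcd hpc⟩ ⟨hcd, hdc⟩

theorem IsMonoidHeightOnePrime.exists_uniformizer (hP : IsMonoidHeightOnePrime S P)
    (hS : IsKrullMonoid S) :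
    ∃ π ∈ P, ∀ x ∈ monLocMax S P, x - π ∈ hP.1.localization := by
  obtain ⟨c, hc⟩ := hP.exists_eq_colon hS
  have hadd : ∀ x ∈ P, x + c ∈ S := fun x hx => (hc ▸ hx : x ∈ colon S c).2
  obtain ⟨π, hπ, hπc⟩ : ∃ π ∈ P, π + c ∉ P := by
    by_contra! hPc
    obtain ⟨p, hp⟩ := hP.2.1
    have hpn (n : ℕ) : p + n • c ∈ P := by
      induction n with
      | zero => simpa using hp
      | succ n ih => simpa [succ_nsmul, add_assoc] using hPc _ ih
    have hcS : c ∈ S := hS.1 c ⟨p, hP.1.1 hp, fun n => hP.1.1 (hpn n)⟩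
    exact hP.1.zero_notMem (hc ▸ ⟨S.zero_mem, by simpa using hcS⟩)
  refine ⟨π, hπ, ?_⟩
  rintro _ ⟨p, hp, w, hw, rfl⟩
  have hpπ : p + c - (π + c) ∈ hP.1.localization := ⟨_, hadd p hp, _, hadd π hπ, hπc, rfl⟩
  convert add_mem hpπ hw using 1
  abel

end Krull

section Valuation

variable {G : Type*} [AddCommGroup G]

theorem zsmul_mem_iff_nonneg {L : AddSubmonoid G} {π : G} (hπ : π ∈ L) (hπ' : -π ∉ L) {k : ℤ} :
    k • π ∈ L ↔ 0 ≤ k := by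
  refine ⟨fun hk => ?_, fun hk => ?_⟩
  · by_contra! hneg
    obtain ⟨m, rfl⟩ : ∃ m : ℕ, k = -(m + 1) := ⟨(-k - 1).toNat, by lia⟩
    exact hπ' (by simpa [add_smul] using add_mem (nsmul_mem hπ m) hk)
  · lift k to ℕ using hk
    simpa using nsmul_mem hπ k

theorem exists_sub_zsmul_mem_support {L : AddSubmonoid G} {π : G} (hπ : π ∈ L) (hπ' : -π ∉ L)
    (hdvd : ∀ x ∈ L, -x ∉ L → x - π ∈ L) (harch : ∀ x, ∃ k : ℕ, k • π - x ∈ L) (x : G) :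
    ∃ k : ℤ, x - k • π ∈ L.support := by
  obtain ⟨m, hm⟩ := harch (-x)
  obtain ⟨n, hn⟩ := harch x
  obtain ⟨k, hk, hkmax⟩ : ∃ k : ℤ, x - k • π ∈ L ∧ ∀ l : ℤ, x - l • π ∈ L → l ≤ k := by
    refine Int.exists_greatest_of_bdd ⟨n, fun l hl => ?_⟩ ⟨-m, by simpa [add_comm] using hm⟩
    have hnl : ((n : ℤ) - l) • π ∈ L := by
      simpa [sub_smul] using add_mem hn hl
    simpa using (zsmul_mem_iff_nonneg hπ hπ').1 hnl
  refine ⟨k, AddSubmonoid.mem_support.2 ⟨hk, ?_⟩⟩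
  by_contra hneg
  have := hkmax (k + 1) (by simpa [add_smul, sub_sub] using hdvd _ hk hneg)
  lia

theorem exists_addMonoidHom_mem_iff_nonneg {L : AddSubmonoid G} {π : G} (hπ : π ∈ L)
    (hπ' : -π ∉ L) (hdvd : ∀ x ∈ L, -x ∉ L → x - π ∈ L)
    (harch : ∀ x, ∃ k : ℕ, k • π - x ∈ L) :
    ∃ v : G →+ ℤ, v π = 1 ∧ ∀ x, x ∈ L ↔ 0 ≤ v x := by
  choose v hv using exists_sub_zsmul_mem_support hπ hπ' hdvd harch
  have hv_unique {x : G} {k : ℤ} (hk : x - k • π ∈ L.support) : v x = k := by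
    have hdiff : (v x - k) • π ∈ L.support := by
      simpa [sub_smul] using sub_mem hk (hv x)
    have hle := (zsmul_mem_iff_nonneg hπ hπ').1 (AddSubmonoid.mem_support.1 hdiff).1
    have hge := (zsmul_mem_iff_nonneg hπ hπ' (k := -(v x - k))).1
      (by simpa only [neg_smul] using (AddSubmonoid.mem_support.1 hdiff).2)
    lia
  refine ⟨.mk' v fun x y => hv_unique ?_, hv_unique (by simp), fun x => ?_⟩
  · simpa [add_smul, add_sub_add_comm] using add_mem (hv x) (hv y)
  · obtain ⟨hpos, hneg⟩ := AddSubmonoid.mem_support.1 (hv x)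
    rw [AddMonoidHom.mk'_apply, ← zsmul_mem_iff_nonneg hπ hπ']
    exact ⟨fun hx => by simpa using add_mem hx hneg, fun hx => by simpa using add_mem hx hpos⟩

/-- `v` is the normalized `P`-adic valuation `v_P` of `S`: a surjective homomorphism from the
quotient group onto `ℤ` whose valuation monoid is the localization `S_P`. -/
structure IsAdicValuation (S : AddSubmonoid G) (P : Set G) (v : G →+ ℤ) : Prop where
  surjective : Function.Surjective v
  mem_monLoc_iff : ∀ x, x ∈ monLoc S P ↔ 0 ≤ v x

variable {S : AddSubmonoid G} {P : Set G}

theorem IsMonoidHeightOnePrime.exists_isAdicValuation (hP : IsMonoidHeightOnePrime S P)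
    (hS : IsKrullMonoid S) (hq : ∀ x : G, ∃ a ∈ S, ∃ b ∈ S, x = a - b) :
    ∃ v : G →+ ℤ, IsAdicValuation S P v := by
  obtain ⟨π, hπ, hdvd⟩ := hP.exists_uniformizer hS
  have harch (x : G) : ∃ k : ℕ, k • π - x ∈ hP.1.localization := by
    obtain ⟨s, hs, t, ht, rfl⟩ := hq x
    obtain ⟨k, hk⟩ := hP.exists_nsmul_sub_mem_localization hπ hs
    exact ⟨k, by simpa [sub_add] using add_mem hk (hP.1.le_localization ht)⟩
  obtain ⟨v, hvπ, hv⟩ := exists_addMonoidHom_mem_iff_nonneg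
    (hP.1.le_localization (hP.1.1 hπ)) (hP.1.neg_notMem_localization hπ)
    (fun x hx hneg => hdvd x (hP.1.mem_monLocMax_iff.2 ⟨hx, hneg⟩)) harch
  exact ⟨v, fun k => ⟨k • π, by simp [hvπ]⟩, hv⟩

namespace IsAdicValuation

variable {v : G →+ ℤ}

theorem mvalZero_iff (hv : IsAdicValuation S P v) {x : G} : mvalZero S P x ↔ v x = 0 := by
  rw [mvalZero, hv.mem_monLoc_iff, hv.mem_monLoc_iff, map_neg]
  lia

theorem mem_monLocMax_iff (hv : IsAdicValuation S P v) (hP : IsMonoidPrimeIdeal S P) {x : G} :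
    x ∈ monLocMax S P ↔ 0 < v x := by
  have hloc (y : G) : y ∈ hP.localization ↔ 0 ≤ v y := hv.mem_monLoc_iff y
  rw [hP.mem_monLocMax_iff, hloc, hloc, map_neg]
  lia

theorem apply_eq_one_of_mvalOne (hv : IsAdicValuation S P v) (hP : IsMonoidPrimeIdeal S P) {x : G}
    (hx : mvalOne S P x) : v x = 1 := by
  obtain ⟨hpos, hirred⟩ := hx
  rw [hv.mem_monLocMax_iff hP] at hpos
  by_contra hne
  obtain ⟨π, hπ⟩ := hv.surjective 1
  refine hirred ⟨π, (hv.mem_monLocMax_iff hP).2 ?_, x - π, (hv.mem_monLocMax_iff hP).2 ?_, by abel⟩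
  · lia
  · rw [map_sub]
    lia

end IsAdicValuation

end Valuation

section GroupAlgebra

open LaurentPolynomial in
theorem prime_C_add_T {R : Type*} [CommRing R] [IsDomain R] {r : R} (hr : r ≠ 0) :
    Prime (C r + T 1 : R[T;T⁻¹]) := by
  have himage : C r + T 1 = algebraMap (Polynomial R) R[T;T⁻¹] (.X - .C (-r)) := by
    simp [algebraMap_eq_toLaurent, add_comm]
  have hne : C r + T 1 ≠ 0 := by
    rw [himage, algebraMap_eq_toLaurent, Polynomial.toLaurent_ne_zero]
    exact Polynomial.X_sub_C_ne_zero _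
  rw [← Ideal.span_singleton_prime hne, himage, ← Set.image_singleton, ← Ideal.map_span]
  refine IsLocalization.isPrime_of_isPrime_disjoint (.powers Polynomial.X) _ _
    ((Ideal.span_singleton_prime (Polynomial.X_sub_C_ne_zero _)).2 (Polynomial.prime_X_sub_C _))
    (Set.disjoint_left.2 ?_)
  rintro _ ⟨m, rfl⟩ hm
  have hroot := Polynomial.dvd_iff_isRoot.1 (Ideal.mem_span_singleton.1 hm)
  exact hr (by simpa using eq_zero_of_pow_eq_zero (by simpa using hroot : (-r) ^ m = 0))

variable {G : Type*} [AddCommGroup G]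

/-- The splitting `G ≃+ ℤ × ker v` of a homomorphism `v : G →+ ℤ` given by an element `b` with
`v b = 1`, which corresponds to `(1, 0)`. -/
def equivIntProdKer (v : G →+ ℤ) {b : G} (hb : v b = 1) : G ≃+ ℤ × v.ker where
  toFun x := (v x, ⟨x - v x • b, by simp [hb]⟩)
  invFun p := p.2 + p.1 • b
  left_inv x := by simp
  right_inv := by
    rintro ⟨k, u, hu⟩
    have hu : v u = 0 := hu
    simp [hb, hu]
  map_add' x y := by
    ext <;> simp [add_smul, add_sub_add_comm]

theorem equivIntProdKer_self {v : G →+ ℤ} {b : G} (hb : v b = 1) :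
    equivIntProdKer v hb b = (1, 0) := by
  simp [equivIntProdKer, hb]

theorem equivIntProdKer_coe {v : G →+ ℤ} {b : G} (hb : v b = 1) (u : v.ker) :
    equivIntProdKer v hb u = (0, u) := by
  have hu : v u = 0 := u.2
  simp [equivIntProdKer, hu]

open AddMonoidAlgebra LaurentPolynomial

/-- The identification of the group algebra `K[G]` with the Laurent polynomial ring over `K[ker v]`,
where `v : G →+ ℤ` and the variable `T` corresponds to `X^b` for an element `b` with `v b = 1`. -/
def equivLaurent (K : Type*) [Semiring K] (v : G →+ ℤ) {b : G} (hb : v b = 1) :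
    AddMonoidAlgebra K G ≃+* LaurentPolynomial (AddMonoidAlgebra K v.ker) :=
  (mapDomainRingEquiv K (equivIntProdKer v hb)).trans curryRingEquiv

section Semiring

variable {K : Type*} [Semiring K] {v : G →+ ℤ} {b : G}

theorem equivLaurent_single_self (hb : v b = 1) :
    equivLaurent K v hb (single b 1) = T 1 := by
  simp [equivLaurent, equivIntProdKer_self, ← one_def]

theorem equivLaurent_mapDomainRingHom (hb : v b = 1) (f : AddMonoidAlgebra K v.ker) :
    equivLaurent K v hb (mapDomainRingHom K v.ker.subtype f) = C f := by
  induction f using AddMonoidAlgebra.induction_linear with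
  | zero => simp
  | add f₁ f₂ h₁ h₂ => simp only [map_add, h₁, h₂]
  | single u r => simp [equivLaurent, equivIntProdKer_coe]

end Semiring

theorem prime_mapDomain_add_single {K : Type*} [CommRing K] {v : G →+ ℤ}
    [IsDomain (AddMonoidAlgebra K v.ker)] {b : G} (hb : v b = 1) {f : AddMonoidAlgebra K v.ker}
    (hf : f ≠ 0) : Prime (mapDomainRingHom K v.ker.subtype f + single b 1) := by
  rw [← MulEquiv.prime_iff (equivLaurent K v hb), map_add, equivLaurent_mapDomainRingHom,
    equivLaurent_single_self]
  exact prime_C_add_T hf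

theorem sum_single_one_ne_zero {K M ι : Type*} [Semiring K] [Nontrivial K] [Fintype ι] [Nonempty ι]
    {g : ι → M} (hg : Function.Injective g) : ∑ i, single (g i) (1 : K) ≠ 0 := by
  classical
  intro h
  inhabit ι
  have hcoeff := congrArg (fun f => f.coeff (g default)) h
  simp [coeff_sum, Finsupp.single_apply, hg.eq_iff] at hcoeff

theorem twoUniqueSums_of_isAddTorsionFree [IsAddTorsionFree G] : TwoUniqueSums G :=
  .of_injective_addHom (DivisibleHull.coeAddMonoidHom G).toAddHom DivisibleHull.coe_injective
    inferInstance

end GroupAlgebra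

theorem claim_B_irreducible_general {K : Type*} [CommRing K] [IsDomain K]
    {G : Type*} [AddCommGroup G] [IsAddTorsionFree G] {S : AddSubmonoid G}
    (hq : ∀ x : G, ∃ a ∈ S, ∃ b ∈ S, x = a - b) (hS : IsKrullMonoid S)
    {P : Set G} (hP : IsMonoidHeightOnePrime S P) {a : G} (hva : mvalOne S P a)
    {ι : Type*} [Fintype ι] {g : ι → G} (hginj : Function.Injective g)
    (hvg : ∀ i, mvalZero S P (g i)) (j : ι) :
    Prime ((∑ i, AddMonoidAlgebra.single (g i) (1 : K)) +
      AddMonoidAlgebra.single (g j + a) (1 : K)) := by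
  obtain ⟨v, hv⟩ := hP.exists_isAdicValuation hS hq
  have hvb : v (g j + a) = 1 := by
    rw [map_add, hv.mvalZero_iff.1 (hvg j), hv.apply_eq_one_of_mvalOne hP.1 hva, zero_add]
  let u (i : ι) : v.ker := ⟨g i, hv.mvalZero_iff.1 (hvg i)⟩
  have hu : Function.Injective u := fun i k h => hginj (congrArg Subtype.val h)
  have := twoUniqueSums_of_isAddTorsionFree (G := v.ker)
  have : Nonempty ι := ⟨j⟩
  have hprime := prime_mapDomain_add_single hvb (sum_single_one_ne_zero (K := K) hu)
  simpa [u] using hprime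

/-- **Claim B.** Let `K` be a field, `S` a reduced torsion-free Krull monoid with quotient
group `G`, `P` a height-one prime ideal of `S`, `a ∈ S` with `v_P(a) = 1`, and
`g₀, …, gₙ ∈ G` pairwise distinct with `v_P(gᵢ) = 0` for all `i`. Then
`X^{g₀} + … + X^{gₙ} + X^{gₙ + a}` is irreducible in the group algebra `K[G]`. -/
theorem claim_B_irreducible {K : Type*} [Field K] {G : Type*} [AddCommGroup G]
    (S : AddSubmonoid G)
    (hq : ∀ x : G, ∃ a ∈ S, ∃ b ∈ S, x = a - b)
    (htf : IsAddTorsionFree G)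
    (hred : ∀ x : G, x ∈ S → -x ∈ S → x = 0)
    (hS : IsKrullMonoid S)
    (P : Set G) (hP : IsMonoidHeightOnePrime S P)
    (a : G) (haS : a ∈ S) (hva : mvalOne S P a)
    (n : ℕ) (g : Fin (n + 1) → G) (hginj : Function.Injective g)
    (hvg : ∀ i, mvalZero S P (g i)) :
    Irreducible ((∑ i, AddMonoidAlgebra.single (g i) (1 : K)) +
      AddMonoidAlgebra.single (g (Fin.last n) + a) (1 : K)) := by
  have := twoUniqueSums_of_isAddTorsionFree (G := G)
  exact (claim_B_irreducible_general hq hS hP hva hginj hvg (Fin.last n)).irreducible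

end
end
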